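/- arXiv:1610.09221 — 2 statements merged into one kernel-verified Lean document; each statement's English description precedes it below -/
import Mathlib

section
/- Let n ≥ 1 and consider the matching-market instance with buyers I = {1, …, n}, items J = {j_1, …, j_n}, preference sets S_i = {j_i}, and valuations and budgets v_i = b_i = n/(n − i + 1) for every i. Then for every price q ≥ 0, every feasible, individually rational outcome (X, p) that is envy-free with respect to the constant item pricing assigning price q to every item (i.e., p_i = q·|X_i| for all i, and no bundle X' ⊆ J satisfies u_i(X', q·|X'|) > u_i(X_i, p_i)) has revenue Σ_{i∈I} p_i ≤ n. -/
open Finset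

/-- Utility of a buyer with preference set `S`, valuation `v`, budget `b`,
for bundle `Z` at payment `t`: `v·|Z ∩ S| − t` if `t ≤ b`, and `−∞` otherwise. -/
noncomputable def utility {J : Type*} [DecidableEq J] (S : Finset J) (v b : ℝ)
    (Z : Finset J) (t : ℝ) : EReal :=
  if t ≤ b then ((v * ((Z ∩ S).card : ℝ) - t : ℝ) : EReal) else ⊥

/-- Valuation (= budget) of buyer `i` (0-indexed, standing for `i+1 ∈ {1,…,n}`)
in the lower-bound instance: `n / (n − (i+1) + 1) = n / (n − i)`. -/
noncomputable def mval (n : ℕ) (i : Fin n) : ℝ := (n : ℝ) / ((n : ℝ) - (i : ℕ))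

/-!
A buyer demanding `Z` at the uniform price `q` weakly prefers it to `∅`, so she can afford it and
it is worth its price, and to `Z ∩ S`, so she pays for no more than `Z ∩ S`. Hence she pays nothing
unless `q ≤ min v b`, and then at most `q · |S|`. In the lower-bound instance, if
`k` is the first buyer with `q ≤ mval n k`, only the last `n - k` buyers can pay, and each pays at
most `q ≤ mval n k = n / (n - k)`.
-/

section Demand

variable {J : Type*} [DecidableEq J] {S Z : Finset J} {v b q t : ℝ}

lemma utility_of_le (h : t ≤ b) :
    utility S v b Z t = ((v * (#(Z ∩ S) : ℝ) - t : ℝ) : EReal) :=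
  if_pos h

lemma utility_nonneg_iff : 0 ≤ utility S v b Z t ↔ t ≤ b ∧ t ≤ v * #(Z ∩ S) := by
  by_cases h : t ≤ b
  · rw [utility_of_le h, EReal.coe_nonneg, sub_nonneg, and_iff_right h]
  · simp [utility, h]

/-- The bundle `Z` is in the demand set of the buyer with preference set `S`, valuation `v` and
budget `b` when every item has price `q`: it maximizes her utility. Envy-freeness of an outcome
means that every buyer's bundle is demanded. -/
def IsDemanded (q : ℝ) (S : Finset J) (v b : ℝ) (Z : Finset J) : Prop :=
  ∀ Z' : Finset J, utility S v b Z' (q * (#Z' : ℝ)) ≤ utility S v b Z (q * (#Z : ℝ))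

namespace IsDemanded

lemma utility_nonneg (hZ : IsDemanded q S v b Z) (hb : 0 ≤ b) :
    0 ≤ utility S v b Z (q * #Z) :=
  calc (0 : EReal) ≤ utility S v b ∅ (q * #(∅ : Finset J)) := by simp [utility_nonneg_iff, hb]
    _ ≤ utility S v b Z (q * #Z) := hZ ∅

lemma payment_le_budget (hZ : IsDemanded q S v b Z) (hb : 0 ≤ b) : q * #Z ≤ b :=
  (utility_nonneg_iff.1 (hZ.utility_nonneg hb)).1

lemma payment_le_value (hZ : IsDemanded q S v b Z) (hb : 0 ≤ b) : q * #Z ≤ v * #(Z ∩ S) :=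
  (utility_nonneg_iff.1 (hZ.utility_nonneg hb)).2

lemma payment_le_price_mul_card_inter (hZ : IsDemanded q S v b Z) (hq : 0 ≤ q) (hb : 0 ≤ b) :
    q * #Z ≤ q * #(Z ∩ S) := by
  have hZb : q * #Z ≤ b := hZ.payment_le_budget hb
  have hinter : q * #(Z ∩ S) ≤ b :=
    le_trans (by gcongr; exact inter_subset_left) hZb
  have henvy := hZ (Z ∩ S)
  rw [utility_of_le hinter, utility_of_le hZb, EReal.coe_le_coe_iff, inter_assoc, inter_self]
    at henvy
  exact (sub_le_sub_iff_left _).1 henvy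

lemma price_le_min (hZ : IsDemanded q S v b Z) (hq : 0 ≤ q) (hb : 0 ≤ b)
    (hne : (Z ∩ S).Nonempty) : q ≤ min v b := by
  have hinter : q * #(Z ∩ S) ≤ q * #Z := by gcongr; exact inter_subset_left
  have hone : (1 : ℝ) ≤ #(Z ∩ S) := by exact_mod_cast hne.card_pos
  refine le_min ?_ ?_
  · exact le_of_mul_le_mul_right (hinter.trans (hZ.payment_le_value hb)) (one_pos.trans_le hone)
  · exact (le_mul_of_one_le_right hq hone).trans (hinter.trans (hZ.payment_le_budget hb))

lemma payment_le_ite (hZ : IsDemanded q S v b Z) (hq : 0 ≤ q) (hb : 0 ≤ b) :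
    q * #Z ≤ if q ≤ min v b then q * #S else 0 := by
  have hpay := hZ.payment_le_price_mul_card_inter hq hb
  split_ifs with hmin
  · exact hpay.trans (by gcongr; exact inter_subset_right)
  · have hempty : Z ∩ S = ∅ := not_nonempty_iff_eq_empty.1 fun hne =>
      hmin (hZ.price_le_min hq hb hne)
    simpa only [hempty, card_empty, Nat.cast_zero, mul_zero] using hpay

end IsDemanded

lemma sum_payment_le_price_mul_sum_card {I : Type*} [Fintype I] {S X : I → Finset J}
    {v b : I → ℝ} (hq : 0 ≤ q) (hb : ∀ i, 0 ≤ b i)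
    (hX : ∀ i, IsDemanded q (S i) (v i) (b i) (X i)) :
    ∑ i, q * (#(X i) : ℝ) ≤ q * ∑ i with q ≤ min (v i) (b i), (#(S i) : ℝ) := by
  rw [mul_sum, sum_filter]
  exact sum_le_sum fun i _ => (hX i).payment_le_ite hq (hb i)

end Demand

section HarmonicValuations

variable {n : ℕ}

lemma mval_nonneg (i : Fin n) : 0 ≤ mval n i :=
  div_nonneg n.cast_nonneg (sub_nonneg.2 (Nat.cast_le.2 i.is_le'))

lemma mval_mul_sub (i : Fin n) : mval n i * (n - (i : ℕ)) = n :=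
  div_mul_cancel₀ _ (sub_pos.2 (Nat.cast_lt.2 i.is_lt)).ne'

lemma mul_card_filter_le_mval_le (q : ℝ) : q * #{i : Fin n | q ≤ mval n i} ≤ n := by
  set s : Finset (Fin n) := {i | q ≤ mval n i}
  obtain hempty | hne := s.eq_empty_or_nonempty
  · simp [hempty]
  set k := s.min' hne
  have hk : q ≤ mval n k := (mem_filter.1 (s.min'_mem hne)).2
  have hcard : (#s : ℝ) ≤ n - (k : ℕ) := by
    rw [← Nat.cast_sub k.is_le', Nat.cast_le, ← Fin.card_Ici]
    exact card_le_card fun i hi => mem_Ici.2 (s.min'_le i hi)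
  calc q * #s ≤ mval n k * #s := by gcongr
    _ ≤ mval n k * (n - (k : ℕ)) := by gcongr; exact mval_nonneg k
    _ = n := mval_mul_sub k

end HarmonicValuations

theorem fixedPrice_revenue_le_general {J : Type*} [DecidableEq J] {n : ℕ} {q : ℝ} (hq : 0 ≤ q)
    (j : Fin n → J) (X : Fin n → Finset J)
    (hX : ∀ i, IsDemanded q {j i} (mval n i) (mval n i) (X i)) :
    ∑ i, q * (#(X i) : ℝ) ≤ n :=
  calc ∑ i, q * (#(X i) : ℝ)
      ≤ q * ∑ i with q ≤ min (mval n i) (mval n i), (#({j i} : Finset J) : ℝ) :=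
        sum_payment_le_price_mul_sum_card hq mval_nonneg hX
    _ = q * #{i : Fin n | q ≤ mval n i} := by
        simp only [min_self, card_singleton, Nat.cast_one, sum_const, nsmul_one]
    _ ≤ n := mul_card_filter_le_mval_le q

/-- in the instance with `n` buyers, `n` items, `S_i = {j_i}`,
`v_i = b_i = n/(n−i+1)`, every feasible, individually rational outcome that is
envy-free with respect to a constant item price `q` has revenue at most `n`. -/
theorem fixedPrice_revenue_le
    (n : ℕ) (hn : 1 ≤ n) (q : ℝ) (hq : 0 ≤ q)
    (X : Fin n → Finset (Fin n)) (p : Fin n → ℝ)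
    (hfeas : ∀ i i', i ≠ i' → Disjoint (X i) (X i'))
    (hp : ∀ i, 0 ≤ p i)
    (hIR : ∀ i, (0 : EReal) ≤ utility {i} (mval n i) (mval n i) (X i) (p i))
    (hprice : ∀ i, p i = q * ((X i).card : ℝ))
    (hEF : ∀ i (X' : Finset (Fin n)),
      utility {i} (mval n i) (mval n i) X' (q * (X'.card : ℝ)) ≤
        utility {i} (mval n i) (mval n i) (X i) (p i)) :
    ∑ i, p i ≤ (n : ℝ) := by
  simp only [hprice] at hEF ⊢
  exact fixedPrice_revenue_le_general hq id X hEF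
end

section
/- Let I and J be finite sets, E ⊆ I × J, and c : I → ℕ, and let M be a maximum B-matching with respect to (E, c). If j ∈ J is an item not covered by M and there exists an M-augmenting path from a buyer i ∈ I to j, then buyer i is incident to exactly c(i) edges of M (i.e., i is saturated: |{j' ∈ J : (i, j') ∈ M}| = c(i)). -/
open Finset

/-- `M` is a B-matching with respect to edges `E` and capacities `c`:
`M ⊆ E`, every buyer `i` is incident to at most `c i` edges of `M`, and every
item is incident to at most one edge of `M`. -/
def IsBMatching {I J : Type*} [DecidableEq I] [DecidableEq J]
    (E M : Finset (I × J)) (c : I → ℕ) : Prop :=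
  M ⊆ E ∧ (∀ i : I, (M.filter (fun e => e.1 = i)).card ≤ c i) ∧
    (∀ j : J, (M.filter (fun e => e.2 = j)).card ≤ 1)

/-- An `M`-augmenting path from buyer `i` to item `j`: a sequence
`y_0, z_0, …, y_h, z_h` of pairwise-distinct buyers and pairwise-distinct items
with `y_0 = i`, `z_h = j`, `(y_k, z_k) ∈ E \ M` for all `k`, and
`(z_k, y_{k+1}) ∈ M` for all `k < h`. -/
def IsAugPath {I J : Type*} (E M : Finset (I × J)) (i : I) (j : J) : Prop :=
  ∃ (h : ℕ) (y : Fin (h + 1) → I) (z : Fin (h + 1) → J),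
    Function.Injective y ∧ Function.Injective z ∧
    y 0 = i ∧ z (Fin.last h) = j ∧
    (∀ k, (y k, z k) ∈ E ∧ (y k, z k) ∉ M) ∧
    (∀ k : Fin h, (y k.succ, z k.castSucc) ∈ M)

/-!
Suppose `i` has spare capacity. Along an augmenting path `i = y_0, z_0, y_1, z_1, …`, handing the
item `z_0` over from `y_1` to `i` gives a B-matching of the same size in which `y_1` has spare
capacity and for which the rest of the path is still augmenting. Once only the last edge is left,
it can simply be added, contradicting maximality.
-/

section Augmentation

variable {I J : Type*} [DecidableEq I] [DecidableEq J] {E M M' : Finset (I × J)} {c : I → ℕ}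
  {i i' : I} {j z : J}

/-- The exchange step of an augmentation: the item `z`, matched to `i'` in `M`, is handed over
to `i`. If `(i', z) ∉ M`, it merely adds `(i, z)`. -/
def reassign (M : Finset (I × J)) (z : J) (i' i : I) : Finset (I × J) :=
  insert (i, z) (M.erase (i', z))

theorem card_reassign (hi : (i, z) ∉ M) (hi' : (i', z) ∈ M) : #(reassign M z i' i) = #M := by
  rw [reassign, card_insert_of_notMem (mt mem_of_mem_erase hi), card_erase_add_one hi']

theorem card_filter_reassign_lt (hne : i ≠ i') (hi' : (i', z) ∈ M) :
    #{e ∈ reassign M z i' i | e.1 = i'} < #{e ∈ M | e.1 = i'} := by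
  rw [reassign, filter_insert, if_neg hne, filter_erase]
  exact card_erase_lt_of_mem (mem_filter.2 ⟨hi', rfl⟩)

namespace IsBMatching

theorem subset (hM : IsBMatching E M c) (hsub : M' ⊆ M) : IsBMatching E M' c :=
  ⟨hsub.trans hM.1,
    fun i => (card_le_card (filter_subset_filter _ hsub)).trans (hM.2.1 i),
    fun j => (card_le_card (filter_subset_filter _ hsub)).trans (hM.2.2 j)⟩

theorem insert (hM : IsBMatching E M c) (hE : (i, j) ∈ E)
    (hi : #{e ∈ M | e.1 = i} < c i) (hj : ∀ e ∈ M, e.2 ≠ j) :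
    IsBMatching E (insert (i, j) M) c := by
  refine ⟨insert_subset hE hM.1, fun b => ?_, fun t => ?_⟩
  · rw [filter_insert]
    split_ifs with hb
    · obtain rfl : i = b := hb
      exact (card_insert_le _ _).trans hi
    · exact hM.2.1 b
  · rw [filter_insert]
    split_ifs with ht
    · obtain rfl : j = t := ht
      simp [filter_eq_empty_iff.2 hj]
    · exact hM.2.2 t

theorem snd_ne_of_mem_erase (hM : IsBMatching E M c) (hz : (i, z) ∈ M) :
    ∀ e ∈ M.erase (i, z), e.2 ≠ z := by
  intro e he hez
  obtain ⟨hne, heM⟩ := mem_erase.1 he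
  exact hne (card_le_one.1 (hM.2.2 z) e (mem_filter.2 ⟨heM, hez⟩) (i, z)
    (mem_filter.2 ⟨hz, rfl⟩))

theorem reassign (hM : IsBMatching E M c) (hE : (i, z) ∈ E)
    (hi : #{e ∈ M | e.1 = i} < c i) (hi' : (i', z) ∈ M) :
    IsBMatching E (reassign M z i' i) c :=
  have herase : M.erase (i', z) ⊆ M := erase_subset _ _
  (hM.subset herase).insert hE ((card_le_card (filter_subset_filter _ herase)).trans_lt hi)
    (hM.snd_ne_of_mem_erase hi')

end IsBMatching

theorem IsAugPath.induction_on {motive : Finset (I × J) → I → Prop} (hpath : IsAugPath E M i j)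
    (edge : ∀ {M i}, (i, j) ∈ E → (i, j) ∉ M → motive M i)
    (exchange : ∀ {M i i' z}, (i, z) ∈ E → (i, z) ∉ M → (i', z) ∈ M →
      motive (reassign M z i' i) i' → motive M i) :
    motive M i := by
  obtain ⟨h, y, z, hy, -, rfl, hlast, hE, hM⟩ := hpath
  induction h generalizing M with
  | zero =>
    obtain rfl : z 0 = j := hlast
    exact edge (hE 0).1 (hE 0).2
  | succ h ih =>
    refine exchange (hE 0).1 (hE 0).2 (hM 0) ?_
    -- As the buyers are distinct, the exchange at `z 0` affects no edge of the remaining path.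
    refine ih (y ∘ Fin.succ) (z ∘ Fin.succ) (hy.comp (Fin.succ_injective _)) hlast
      (fun k => ⟨(hE k.succ).1, fun hk => ?_⟩) (fun k => ?_)
    · have hne : y k.succ ≠ y 0 := hy.ne (Fin.succ_ne_zero k)
      rcases mem_insert.1 hk with heq | hmem
      · exact hne (congrArg Prod.fst heq)
      · exact (hE k.succ).2 (mem_of_mem_erase hmem)
    · have hne : y k.succ.succ ≠ y (Fin.succ 0) :=
        hy.ne ((Fin.succ_injective _).ne (Fin.succ_ne_zero k))
      exact mem_insert_of_mem
        (mem_erase.2 ⟨fun heq => hne (congrArg Prod.fst heq), hM k.succ⟩)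

theorem exists_isBMatching_card_eq_add_one (hM : IsBMatching E M c)
    (hi : #{e ∈ M | e.1 = i} < c i) (hj : ∀ e ∈ M, e.2 ≠ j) (hpath : IsAugPath E M i j) :
    ∃ M', IsBMatching E M' c ∧ #M' = #M + 1 := by
  refine hpath.induction_on
    (motive := fun M i => IsBMatching E M c → #{e ∈ M | e.1 = i} < c i → (∀ e ∈ M, e.2 ≠ j) →
      ∃ M', IsBMatching E M' c ∧ #M' = #M + 1) ?edge ?exchange hM hi hj
  case edge =>
    intro M i hE hnot hM hi hj
    exact ⟨_, hM.insert hE hi hj, card_insert_of_notMem hnot⟩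
  case exchange =>
    intro M i i' z hE hnot hi' ih hM hi hj
    have hne : i ≠ i' := fun heq => hnot (heq ▸ hi')
    have hspare : #{e ∈ reassign M z i' i | e.1 = i'} < c i' :=
      (card_filter_reassign_lt hne hi').trans_le (hM.2.1 i')
    have huncov : ∀ e ∈ reassign M z i' i, e.2 ≠ j :=
      (forall_mem_insert _ _ _).2 ⟨hj (i', z) hi', fun e he => hj e (mem_of_mem_erase he)⟩
    rw [← card_reassign hnot hi']
    exact ih (hM.reassign hE hi hi') hspare huncov

theorem augPath_to_uncovered_saturated_general (hM : IsBMatching E M c)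
    (hmax : ∀ M', IsBMatching E M' c → #M' ≤ #M) (hj : ∀ e ∈ M, e.2 ≠ j)
    (hpath : IsAugPath E M i j) : #{e ∈ M | e.1 = i} = c i := by
  by_contra hne
  have hspare : #{e ∈ M | e.1 = i} < c i := (hM.2.1 i).lt_of_ne hne
  obtain ⟨M', hM', hcard⟩ := exists_isBMatching_card_eq_add_one hM hspare hj hpath
  have hle : #M' ≤ #M := hmax M' hM'
  lia

end Augmentation

/-- if `M` is a maximum B-matching, `j` is an item not covered by
`M`, and there is an `M`-augmenting path from buyer `i` to `j`, then `i` is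
saturated: it is incident to exactly `c i` edges of `M`. -/
theorem augPath_to_uncovered_saturated
    {I J : Type*} [Fintype I] [Fintype J] [DecidableEq I] [DecidableEq J]
    (E M : Finset (I × J)) (c : I → ℕ)
    (hM : IsBMatching E M c)
    (hmax : ∀ M', IsBMatching E M' c → M'.card ≤ M.card)
    (j : J) (huncov : ∀ e ∈ M, e.2 ≠ j)
    (i : I) (hpath : IsAugPath E M i j) :
    (M.filter (fun e => e.1 = i)).card = c i :=
  augPath_to_uncovered_saturated_general hM hmax huncov hpath
end
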